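/- Let G be a finite simple graph on a vertex set V with |V| = N ≥ 2, and suppose G is a tree (connected and acyclic) in which every vertex has degree at most 3. Call a nonempty subset S ⊆ V a 'triplet' if |S| ≤ 3 and there exists a center c ∈ S such that every element of S other than c is adjacent to c in G. Then there exists a finite family F of triplets covering V and with connected intersection graph (distinct members S, S' adjacent iff S ∩ S' ≠ ∅), together with an assignment to each member S ∈ F of a 2-element subset m(S) ⊆ S, such that the sets m(S) for S ∈ F are pairwise disjoint; in particular 2·|F| ≤ N. -/

import Mathlib

/-- A `triplet` in a graph `G` is a nonempty set of at most 3 vertices having a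
center `c` adjacent to every other element of the set. -/
def IsTriplet {V : Type*} [DecidableEq V] (G : SimpleGraph V) (S : Finset V) : Prop :=
  S.Nonempty ∧ S.card ≤ 3 ∧ ∃ c ∈ S, ∀ x ∈ S, x ≠ c → G.Adj c x

/-!
A finite connected graph with at least three vertices can be shrunk, staying connected, by deleting
two vertices which form a triplet with a third one. Measure depth as the distance to a root, call a
neighbour of a vertex that is closer to the root a parent of it, and let `p` be a parent of a
deepest vertex `u`. If another deepest vertex `w` is adjacent to `p`, delete `u` and `w`, with `p`
as third vertex; otherwise delete `u` and `p`, and a parent of `p` is the third vertex. Every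
remaining vertex other than the root keeps a parent, so what is left is connected. Adding these
triplets back one at a time, each meets the connected family built so far in its third vertex, and
its two deleted vertices are the selected pair.
-/

open Finset

section Connectivity

variable {V W : Type*} {G : SimpleGraph V} {H : SimpleGraph W}

lemma exists_adj_dist_add_one_eq (hG : G.Connected) {r v : V} (hv : v ≠ r) :
    ∃ w, G.Adj v w ∧ G.dist w r + 1 = G.dist v r := by
  obtain ⟨p, hp⟩ := hG.exists_walk_length_eq_dist v r
  cases p with
  | nil => exact absurd rfl hv
  | @cons _ w _ hvw q =>
    refine ⟨w, hvw, ?_⟩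
    have hq : G.dist w r ≤ q.length := SimpleGraph.dist_le q
    have htri : G.dist v r ≤ G.dist v w + G.dist w r := hG.dist_triangle
    rw [SimpleGraph.dist_eq_one_iff_adj.mpr hvw] at htri
    rw [SimpleGraph.Walk.length_cons] at hp
    omega

lemma connected_induce_of_exists_adj_lt {s : Set V} {r : V} (hr : r ∈ s) (depth : V → ℕ)
    (hdesc : ∀ v ∈ s, v ≠ r → ∃ w ∈ s, G.Adj v w ∧ depth w < depth v) :
    (G.induce s).Connected := by
  rw [SimpleGraph.connected_iff_exists_forall_reachable]
  suffices h : ∀ v (hv : v ∈ s), (G.induce s).Reachable ⟨r, hr⟩ ⟨v, hv⟩ from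
    ⟨⟨r, hr⟩, fun v => h v v.2⟩
  intro v hv
  induction v using (measure depth).wf.induction with
  | _ v ih =>
    obtain rfl | hvr := eq_or_ne v r
    · exact .refl _
    · obtain ⟨w, hw, hvw, hlt⟩ := hdesc v hv hvr
      have hwv : (G.induce s).Adj ⟨w, hw⟩ ⟨v, hv⟩ := hvw.symm
      exact (ih w hlt hw).trans hwv.reachable

lemma connected_induce_image {s : Set V} (hs : (G.induce s).Connected) (f : G →g H) :
    (H.induce (f '' s)).Connected := by
  refine hs.map (SimpleGraph.induceHom f (Set.mapsTo_image f s)) ?_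
  rintro ⟨_, v, hv, rfl⟩
  exact ⟨⟨v, hv⟩, rfl⟩

lemma fromRel_subtype_eq_induce (R : V → V → Prop) (s : Set V) :
    SimpleGraph.fromRel (fun v w : s => R v w) = (SimpleGraph.fromRel R).induce s := by
  ext v w
  simp [Subtype.ext_iff]

end Connectivity

namespace IsTriplet

variable {V W : Type*} [DecidableEq V] [DecidableEq W] {G : SimpleGraph V} {H : SimpleGraph W}

lemma of_adj_of_adj {c x y : V} (hx : G.Adj c x) (hy : G.Adj c y) : IsTriplet G {c, x, y} := by
  refine ⟨insert_nonempty _ _, card_le_three, c, mem_insert_self _ _, fun z hz hzc => ?_⟩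
  simp only [mem_insert, mem_singleton] at hz
  obtain rfl | rfl | rfl := hz
  · exact absurd rfl hzc
  · exact hx
  · exact hy

lemma image {S : Finset V} (hS : IsTriplet G S) (f : G →g H) : IsTriplet H (S.image f) := by
  obtain ⟨hne, hcard, c, hc, hadj⟩ := hS
  refine ⟨hne.image f, card_image_le.trans hcard, f c, mem_image_of_mem f hc, ?_⟩
  rw [forall_mem_image]
  exact fun x hx hxc => f.map_adj (hadj x hx (ne_of_apply_ne f hxc))

end IsTriplet

section RemovablePair

variable {V : Type*} {G : SimpleGraph V}

lemma connected_induce_compl_of_parent_notMem (hG : G.Connected) {r : V} {P : Set V} (hr : r ∉ P)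
    (hP : ∀ v ∉ P, ∀ w, G.Adj v w → G.dist w r + 1 = G.dist v r → w ∉ P) :
    (G.induce Pᶜ).Connected := by
  refine connected_induce_of_exists_adj_lt hr (fun v => G.dist v r) fun v hv hvr => ?_
  obtain ⟨w, hvw, hwv⟩ := exists_adj_dist_add_one_eq hG hvr
  exact ⟨w, hP v hv w hvw hwv, hvw, by omega⟩

lemma connected_induce_compl_of_farthest (hG : G.Connected) {r : V} {P : Set V} (hr : r ∉ P)
    (hP : ∀ u ∈ P, ∀ v, G.dist v r ≤ G.dist u r) : (G.induce Pᶜ).Connected := by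
  refine connected_induce_compl_of_parent_notMem hG hr fun v _ w _ hwv hw => ?_
  have := hP w hw v
  omega

lemma connected_induce_compl_farthest_and_parent (hG : G.Connected) {r u p : V} (hur : u ≠ r)
    (hpr : p ≠ r) (hmax : ∀ v, G.dist v r ≤ G.dist u r)
    (honly : ∀ v, G.Adj v p → G.dist p r + 1 = G.dist v r → v = u) :
    (G.induce ({u, p} : Set V)ᶜ).Connected := by
  refine connected_induce_compl_of_parent_notMem hG (r := r) ?_ ?_
  · rintro (rfl | rfl)
    · exact hur rfl
    · exact hpr rfl
  · rintro v hv w hvw hwv (rfl | rfl)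
    · have := hmax v
      omega
    · exact hv (.inl (honly v hvw hwv))

lemma exists_farthest_ne [Finite V] [Nontrivial V] (hG : G.Connected) (r : V) :
    ∃ u ≠ r, ∀ v, G.dist v r ≤ G.dist u r := by
  obtain ⟨u, hmax⟩ := Finite.exists_max fun v => G.dist v r
  obtain ⟨v, hv⟩ := exists_ne r
  refine ⟨u, ?_, hmax⟩
  rintro rfl
  have hpos : 0 < G.dist v u := hG.pos_dist_of_ne hv
  have hle : G.dist v u ≤ G.dist u u := hmax v
  rw [SimpleGraph.dist_self] at hle
  omega

variable [DecidableEq V]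

lemma exists_pair_isTriplet_connected_compl [Fintype V] (hG : G.Connected)
    (hcard : 2 < Fintype.card V) :
    ∃ P : Finset V, #P = 2 ∧ ∃ c ∉ P, IsTriplet G (insert c P) ∧
      (G.induce (P : Set V)ᶜ).Connected := by
  obtain ⟨r⟩ := hG.nonempty
  have : Nontrivial V := Fintype.one_lt_card_iff_nontrivial.mp (by omega)
  obtain ⟨u, hur, hmax⟩ := exists_farthest_ne hG r
  obtain ⟨p, hup, hpu⟩ := exists_adj_dist_add_one_eq hG hur
  by_cases hsib : ∃ w, G.Adj w p ∧ G.dist p r + 1 = G.dist w r ∧ w ≠ u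
  · obtain ⟨w, hwp, hpw, hwu⟩ := hsib
    refine ⟨{u, w}, card_pair hwu.symm, p, ?_, .of_adj_of_adj hup.symm hwp.symm, ?_⟩
    · simpa using ⟨hup.ne', hwp.ne'⟩
    · have hwr : w ≠ r := by
        rintro rfl
        simp at hpw
      refine connected_induce_compl_of_farthest hG (r := r) ?_ ?_
      · simpa using ⟨hur.symm, hwr.symm⟩
      · simpa [← hpw, hpu] using hmax
  · push Not at hsib
    -- If `p` were the root, all other vertices would be deepest vertices adjacent to it.
    have hpr : p ≠ r := by
      rintro rfl
      obtain ⟨v, -, hv⟩ : ∃ v ∈ univ, v ∉ ({u, p} : Finset V) :=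
        exists_mem_notMem_of_card_lt_card (card_le_two.trans_lt hcard)
      simp only [mem_insert, mem_singleton, not_or] at hv
      have hvp : G.dist v p = 1 := by
        have := hG.pos_dist_of_ne hv.2
        have := hmax v
        rw [SimpleGraph.dist_self] at hpu
        omega
      exact hv.1 (hsib v (SimpleGraph.dist_eq_one_iff_adj.mp hvp) (by simp [hvp]))
    obtain ⟨q, hpq, hqp⟩ := exists_adj_dist_add_one_eq hG hpr
    have hqu : q ≠ u := by
      rintro rfl
      omega
    refine ⟨{u, p}, card_pair hup.ne, q, by simpa using ⟨hqu, hpq.ne'⟩, ?_, ?_⟩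
    · rw [pair_comm, insert_comm]
      exact .of_adj_of_adj hpq hup.symm
    · rw [coe_pair]
      exact connected_induce_compl_farthest_and_parent hG hur hpr hmax hsib

lemma exists_pair_isTriplet_connected_sdiff {s : Finset V}
    (hs : (G.induce (s : Set V)).Connected) (hcard : 2 < #s) :
    ∃ P ⊆ s, #P = 2 ∧ ∃ c ∈ s \ P, IsTriplet G (insert c P) ∧
      (G.induce ((s \ P : Finset V) : Set V)).Connected := by
  obtain ⟨P, hP, c, hc, hT, hconn⟩ := exists_pair_isTriplet_connected_compl hs (by simpa)
  let incl : G.induce (s : Set V) →g G := (SimpleGraph.Embedding.induce (s : Set V)).toHom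
  have hincl : Function.Injective incl := Subtype.val_injective
  refine ⟨P.image incl, ?_, (card_image_of_injective P hincl).trans hP, incl c, ?_, ?_, ?_⟩
  · exact image_subset_iff.mpr fun v _ => v.2
  · exact mem_sdiff.mpr ⟨c.2, by rwa [hincl.mem_finset_image]⟩
  · simpa only [image_insert] using hT.image incl
  · have hcompl : ((s \ P.image incl : Finset V) : Set V) = incl '' (P : Set s)ᶜ := by
      have hrange : Set.range incl = s := Subtype.range_coe
      rw [Set.image_compl_eq_range_sdiff_image hincl, hrange, coe_sdiff, coe_image]
    rw [hcompl]
    exact connected_induce_image hconn incl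

lemma isTriplet_of_connected_induce {s : Finset V} (hs : (G.induce (s : Set V)).Connected)
    (htwo_le : 2 ≤ #s) (hle_three : #s ≤ 3) : IsTriplet G s := by
  obtain htwo | hthree : #s = 2 ∨ #s = 3 := by omega
  · obtain ⟨c, x, hcx, rfl⟩ := card_eq_two.mp htwo
    have : Nontrivial (({c, x} : Finset V) : Set V) := ⟨⟨c, by simp⟩, ⟨x, by simp⟩, by simpa⟩
    obtain ⟨⟨y, hy⟩, hcy : G.Adj c y⟩ := hs.preconnected.exists_adj_of_nontrivial ⟨c, by simp⟩
    obtain rfl : y = x := by simpa [hcy.ne'] using hy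
    simpa using IsTriplet.of_adj_of_adj hcy hcy
  · obtain ⟨P, hPs, hP, c, hc, hT, -⟩ := exists_pair_isTriplet_connected_sdiff hs (by omega)
    rw [mem_sdiff] at hc
    have hTs : insert c P = s := by
      refine eq_of_subset_of_card_le (insert_subset hc.1 hPs) ?_
      rw [card_insert_of_notMem hc.2, hP, hthree]
    exact hTs ▸ hT

end RemovablePair

/-- The graph on finite sets in which two distinct sets are adjacent when they intersect; a family
`F` has connected intersection graph when the subgraph induced on `F` is connected. -/
def intersectionGraph (V : Type*) [DecidableEq V] : SimpleGraph (Finset V) :=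
  SimpleGraph.fromRel fun S T => (S ∩ T).Nonempty

/-- `F` is a family of triplets with union `s` and connected intersection graph, and `m` selects
pairwise disjoint two-element subsets of its members. The values of `m` outside `F` are
arbitrary. -/
structure IsTripletCover {V : Type*} [DecidableEq V] (G : SimpleGraph V) (s : Finset V)
    (F : Finset (Finset V)) (m : Finset V → Finset V) : Prop where
  isTriplet : ∀ S ∈ F, IsTriplet G S
  biUnion_eq : F.biUnion id = s
  connected : ((intersectionGraph V).induce (F : Set (Finset V))).Connected
  subset : ∀ S ∈ F, m S ⊆ S
  card_eq_two : ∀ S ∈ F, #(m S) = 2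
  pairwiseDisjoint : (F : Set (Finset V)).PairwiseDisjoint m

namespace IsTripletCover

variable {V : Type*} [DecidableEq V] {G : SimpleGraph V} {s : Finset V} {F : Finset (Finset V)}
  {m : Finset V → Finset V}

lemma singleton {P : Finset V} (hs : IsTriplet G s) (hPs : P ⊆ s) (hP : #P = 2) :
    IsTripletCover G s {s} (fun _ => P) where
  isTriplet := by simpa
  biUnion_eq := by simp
  connected := by
    rw [coe_singleton]
    exact SimpleGraph.Connected.of_subsingleton
  subset := by simpa
  card_eq_two := by simpa
  pairwiseDisjoint := by simp

lemma subset_ground (h : IsTripletCover G s F m) {S : Finset V} (hS : S ∈ F) : S ⊆ s :=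
  h.biUnion_eq ▸ subset_biUnion_of_mem id hS

lemma connected_insert (h : IsTripletCover G s F m) {T : Finset V} (hTF : T ∉ F)
    (hTs : (T ∩ s).Nonempty) :
    ((intersectionGraph V).induce (insert T F : Finset (Finset V))).Connected := by
  obtain ⟨c, hc⟩ := hTs
  rw [mem_inter, ← h.biUnion_eq, mem_biUnion] at hc
  obtain ⟨hcT, S, hS, hcS⟩ := hc
  have hTS : (intersectionGraph V).Adj T S :=
    ⟨fun hEq => hTF (hEq ▸ hS), .inl ⟨c, mem_inter.mpr ⟨hcT, hcS⟩⟩⟩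
  rw [coe_insert, Set.insert_eq]
  exact SimpleGraph.connected_induce_union .of_subsingleton h.connected.preconnected
    (Set.mem_singleton T) hS hTS

lemma insert_triplet (h : IsTripletCover G s F m) {P : Finset V} {c : V} (hP : #P = 2)
    (hPs : Disjoint P s) (hc : c ∈ s) (hT : IsTriplet G (insert c P)) :
    IsTripletCover G (P ∪ s) (insert (insert c P) F) (Function.update m (insert c P) P) := by
  set T := insert c P
  have hPT : P ⊆ T := subset_insert c P
  have hTF : T ∉ F := fun hmem => by
    have := hPs.eq_bot_of_le (hPT.trans (h.subset_ground hmem))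
    simp [this] at hP
  have hm : ∀ S ∈ F, Function.update m T P S = m S := fun S hS =>
    Function.update_of_ne (ne_of_mem_of_not_mem hS hTF) _ _
  constructor
  case isTriplet => exact forall_mem_insert .. |>.mpr ⟨hT, h.isTriplet⟩
  case biUnion_eq =>
    rw [biUnion_insert, h.biUnion_eq, id, insert_union, insert_eq_of_mem (mem_union_right P hc)]
  case connected => exact h.connected_insert hTF ⟨c, mem_inter.mpr ⟨mem_insert_self c P, hc⟩⟩
  case subset =>
    refine forall_mem_insert .. |>.mpr ⟨?_, fun S hS => ?_⟩
    · rwa [Function.update_self]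
    · rw [hm S hS]
      exact h.subset S hS
  case card_eq_two =>
    refine forall_mem_insert .. |>.mpr ⟨?_, fun S hS => ?_⟩
    · rwa [Function.update_self]
    · rw [hm S hS]
      exact h.card_eq_two S hS
  case pairwiseDisjoint =>
    rw [coe_insert, Set.pairwiseDisjoint_insert_of_notMem (mod_cast hTF)]
    refine ⟨fun S hS S' hS' hne => ?_, fun S hS => ?_⟩
    · rw [Function.onFun, hm S hS, hm S' hS']
      exact h.pairwiseDisjoint hS hS' hne
    · rw [Function.update_self, hm S hS]
      exact hPs.mono_right ((h.subset S hS).trans (h.subset_ground hS))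

lemma two_mul_card_le (h : IsTripletCover G s F m) : 2 * #F ≤ #s :=
  calc 2 * #F = #(F.biUnion m) := by
        rw [card_biUnion h.pairwiseDisjoint, sum_const_nat h.card_eq_two, mul_comm]
    _ ≤ #s := card_le_card <| biUnion_subset.mpr fun S hS =>
        (h.subset S hS).trans (h.subset_ground hS)

end IsTripletCover

theorem exists_isTripletCover {V : Type*} [DecidableEq V] {G : SimpleGraph V} (s : Finset V)
    (hs : (G.induce (s : Set V)).Connected) (hcard : 2 ≤ #s) : ∃ F m, IsTripletCover G s F m := by
  induction s using Finset.strongInduction with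
  | H s ih =>
    obtain hsmall | hlarge := le_or_gt #s 3
    · obtain ⟨P, hPs, hP⟩ := exists_subset_card_eq hcard
      exact ⟨{s}, fun _ => P, .singleton (isTriplet_of_connected_induce hs hcard hsmall) hPs hP⟩
    · obtain ⟨P, hPs, hP, c, hc, hT, hconn⟩ := exists_pair_isTriplet_connected_sdiff hs (by omega)
      have hssub : s \ P ⊂ s := sdiff_ssubset hPs (card_pos.mp (by omega))
      have hsdiff : 2 ≤ #(s \ P) := by
        rw [card_sdiff_of_subset hPs]
        omega
      obtain ⟨F, m, h⟩ := ih (s \ P) hssub hconn hsdiff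
      rw [← union_sdiff_of_subset hPs]
      exact ⟨_, _, h.insert_triplet hP disjoint_sdiff hc hT⟩

theorem triplet_cover_disjoint_pairs_of_tree_general {V : Type*} [Fintype V] [DecidableEq V]
    [Nontrivial V] {G : SimpleGraph V} (hG : G.Connected) :
    ∃ F : Finset (Finset V), ∃ m : Finset V → Finset V,
      (∀ S ∈ F, IsTriplet G S) ∧
      (∀ v : V, ∃ S ∈ F, v ∈ S) ∧
      (SimpleGraph.fromRel
        (fun S S' : {S // S ∈ F} => ((S : Finset V) ∩ (S' : Finset V)).Nonempty)).Connected ∧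
      (∀ S ∈ F, m S ⊆ S ∧ #(m S) = 2) ∧
      (∀ S ∈ F, ∀ S' ∈ F, S ≠ S' → Disjoint (m S) (m S')) ∧
      2 * #F ≤ Fintype.card V := by
  have huniv : (G.induce ((univ : Finset V) : Set V)).Connected := by
    rw [coe_univ]
    exact (SimpleGraph.induceUnivIso G).connected_iff.mpr hG
  obtain ⟨F, m, h⟩ := exists_isTripletCover univ huniv Fintype.one_lt_card
  refine ⟨F, m, h.isTriplet, fun v => ?_, ?_, fun S hS => ⟨h.subset S hS, h.card_eq_two S hS⟩,
    fun S hS S' hS' => h.pairwiseDisjoint hS hS', h.two_mul_card_le⟩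
  · simpa using h.biUnion_eq.ge (mem_univ v)
  · have hconn := h.connected
    rwa [intersectionGraph, ← fromRel_subtype_eq_induce] at hconn

/-- Structural restatement of Proposition 1: for a tree `G` on `N ≥ 2` vertices with
maximum degree at most 3, there is a family `F` of triplets covering `V` with
connected intersection graph, together with an assignment of a 2-element subset
`m S ⊆ S` to each `S ∈ F` such that the sets `m S` are pairwise disjoint; in
particular `2·|F| ≤ N`. -/
theorem triplet_cover_disjoint_pairs_of_tree
    {V : Type*} [Fintype V] [DecidableEq V] (N : ℕ)
    (hV : Fintype.card V = N) (hN : 2 ≤ N)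
    (G : SimpleGraph V) [DecidableRel G.Adj]
    (htree : G.IsTree) (hdeg : ∀ v : V, G.degree v ≤ 3) :
    ∃ F : Finset (Finset V), ∃ m : Finset V → Finset V,
      (∀ S ∈ F, IsTriplet G S) ∧
      (∀ v : V, ∃ S ∈ F, v ∈ S) ∧
      (SimpleGraph.fromRel
        (fun S S' : {S // S ∈ F} => ((S : Finset V) ∩ (S' : Finset V)).Nonempty)).Connected ∧
      (∀ S ∈ F, m S ⊆ S ∧ (m S).card = 2) ∧
      (∀ S ∈ F, ∀ S' ∈ F, S ≠ S' → Disjoint (m S) (m S')) ∧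
      2 * F.card ≤ N := by
  have : Nontrivial V := Fintype.one_lt_card_iff_nontrivial.mp (by omega)
  exact hV ▸ triplet_cover_disjoint_pairs_of_tree_general htree.connected
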